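/- Let (A_i)_{i∈ℤ} be a family of finitely generated free abelian groups, nonzero for only finitely many i, equipped with a differential ∂ : A_i → A_{i−1} satisfying ∂∘∂ = 0, and suppose every homology group H_i(A) = ker(∂: A_i→A_{i−1})/im(∂: A_{i+1}→A_i) is a free abelian group. Then there is an isomorphism of graded abelian groups det(A) ≅ det(H_*(A)); in particular the Euler characteristics agree: Σ_i (−1)^i rank(A_i) = Σ_i (−1)^i rank(H_i(A)). -/

import Mathlib

/-! # Statement 5: the determinant of a complex is the determinant of its homology -/

noncomputable section
open scoped TensorProduct

/-- Transport along an equality of degrees. -/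
def ccast (A : ℤ → Type) [∀ i, AddCommGroup (A i)] {i j : ℤ} (h : i = j) :
    A i →ₗ[ℤ] A j where
  toFun a := h ▸ a
  map_add' a b := by subst h; rfl
  map_smul' r a := by subst h; rfl

/-- Cycles: the kernel of the differential leaving degree `i`. -/
abbrev cycles (A : ℤ → Type) [∀ i, AddCommGroup (A i)]
    (d : ∀ i, A i →ₗ[ℤ] A (i - 1)) (i : ℤ) : Submodule ℤ (A i) :=
  LinearMap.ker (d i)

/-- Boundaries: the image of the differential entering degree `i`. -/
abbrev boundaries (A : ℤ → Type) [∀ i, AddCommGroup (A i)]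
    (d : ∀ i, A i →ₗ[ℤ] A (i - 1)) (i : ℤ) : Submodule ℤ (A i) :=
  Submodule.map (ccast A (show i + 1 - 1 = i by ring)) (LinearMap.range (d (i + 1)))

/-- The degree-`i` homology of the complex `(A, d)`. -/
abbrev homology (A : ℤ → Type) [∀ i, AddCommGroup (A i)]
    (d : ∀ i, A i →ₗ[ℤ] A (i - 1)) (i : ℤ) : Type :=
  ↥(cycles A d i) ⧸
    (Submodule.comap (cycles A d i).subtype (boundaries A d i))

/-- The top exterior power `det(M) = Λ^{rank M} M` (as an ungraded group). -/
abbrev detTop (M : Type) [AddCommGroup M] : Type :=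
  ⋀[ℤ]^(Module.finrank ℤ M) M

/-- `det(M)^{(−1)^i}`: the top exterior power for `i` even, and its `ℤ`-linear dual
(its inverse line) for `i` odd. -/
def detSigned (M : Type) [AddCommGroup M] (i : ℤ) : Type :=
  if Even i then detTop M else Module.Dual ℤ (detTop M)

noncomputable instance (M : Type) [AddCommGroup M] (i : ℤ) :
    AddCommGroup (detSigned M i) := by
  unfold detSigned; split <;> infer_instance

/-- The underlying line of the graded determinant `det(A) = ⊗ᵢ det(Aᵢ)^{(−1)^i}`
of a graded abelian group supported in degrees `|i| ≤ N`. -/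
abbrev detLine (A : ℤ → Type) [∀ i, AddCommGroup (A i)] (N : ℕ) : Type :=
  ⨂[ℤ] (i : (Finset.Icc (-(N : ℤ)) (N : ℤ))), detSigned (A i.val) i.val

theorem nonempty_detTop_linearEquiv (M : Type) [AddCommGroup M] [Module.Free ℤ M]
    [Module.Finite ℤ M] : Nonempty (detTop M ≃ₗ[ℤ] ℤ) :=
  ⟨LinearEquiv.ofFinrankEq _ _ (by simp [exteriorPower.finrank_eq])⟩

theorem decidable_casesOn_of_pos {p : Prop} {α : Sort*} (D : Decidable p) (f : ¬p → α)
    (g : p → α) (h : p) : Decidable.casesOn (motive := fun _ => α) D f g = g h := by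
  cases D
  · contradiction
  · rfl

theorem decidable_casesOn_of_neg {p : Prop} {α : Sort*} (D : Decidable p) (f : ¬p → α)
    (g : p → α) (h : ¬p) : Decidable.casesOn (motive := fun _ => α) D f g = f h := by
  cases D
  · rfl
  · contradiction

theorem nonempty_addEquiv_of_eq_cast {X Y : Type} (h : Y = X) [I : AddCommGroup Y]
    (J : AddCommGroup X) (hJ : J = cast (congrArg AddCommGroup h) I) : Nonempty (X ≃+ Y) := by
  subst h hJ
  exact ⟨AddEquiv.refl _⟩

theorem nonempty_detSigned_addEquiv_of_even (M : Type) [AddCommGroup M] {i : ℤ} (h : Even i) :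
    Nonempty (detSigned M i ≃+ detTop M) :=
  nonempty_addEquiv_of_eq_cast (if_pos h).symm _ (decidable_casesOn_of_pos _ _ _ h)

theorem nonempty_detSigned_addEquiv_of_not_even (M : Type) [AddCommGroup M] {i : ℤ}
    (h : ¬Even i) : Nonempty (detSigned M i ≃+ Module.Dual ℤ (detTop M)) :=
  nonempty_addEquiv_of_eq_cast (if_neg h).symm _ (decidable_casesOn_of_neg _ _ _ h)

theorem nonempty_detSigned_linearEquiv (M : Type) [AddCommGroup M] [Module.Free ℤ M]
    [Module.Finite ℤ M] (i : ℤ) : Nonempty (detSigned M i ≃ₗ[ℤ] ℤ) := by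
  obtain ⟨e⟩ := nonempty_detTop_linearEquiv M
  suffices Nonempty (detSigned M i ≃+ ℤ) from this.map AddEquiv.toIntLinearEquiv
  by_cases h : Even i
  · obtain ⟨f⟩ := nonempty_detSigned_addEquiv_of_even M h
    exact ⟨f.trans e.toAddEquiv⟩
  · obtain ⟨f⟩ := nonempty_detSigned_addEquiv_of_not_even M h
    exact ⟨f.trans (e.symm.dualMap.trans (LinearMap.ringLmapEquivSelf ℤ ℤ ℤ)).toAddEquiv⟩

theorem sum_Icc_sub_shift (g : ℤ → ℤ) (N : ℕ) :
    ∑ i ∈ Finset.Icc (-(N : ℤ)) N, (g i - g (i - 1)) = g N - g (-(N : ℤ) - 1) := by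
  induction N with
  | zero => simp
  | succ n ih =>
    have h : Finset.Icc (-((n + 1 : ℕ) : ℤ)) ((n + 1 : ℕ) : ℤ) =
        insert (-(n : ℤ) - 1) (insert ((n : ℤ) + 1) (Finset.Icc (-(n : ℤ)) n)) := by
      ext x
      simp only [Finset.mem_Icc, Finset.mem_insert]
      omega
    rw [h, Finset.sum_insert (by simp; omega), Finset.sum_insert (by simp), ih]
    push_cast
    rw [show -((n : ℤ) + 1) - 1 = -(n : ℤ) - 1 - 1 by ring, add_sub_cancel_right]
    ring

theorem neg_one_pow_natAbs_sub_one (i : ℤ) :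
    (-1 : ℤ) ^ (i - 1).natAbs = -(-1) ^ i.natAbs := by
  rcases Int.even_or_odd i with h | h
  · rw [(Int.natAbs_even.2 h).neg_one_pow, (Int.natAbs_odd.2 (h.sub_odd odd_one)).neg_one_pow]
  · rw [(Int.natAbs_odd.2 h).neg_one_pow, (Int.natAbs_even.2 (h.sub_odd odd_one)).neg_one_pow]
    simp

theorem ccast_injective (A : ℤ → Type) [∀ i, AddCommGroup (A i)] {i j : ℤ} (h : i = j) :
    Function.Injective (ccast A h) := by
  subst h
  exact fun _ _ hab => hab

section Complex

variable (A : ℤ → Type) [∀ i, AddCommGroup (A i)] (d : ∀ i, A i →ₗ[ℤ] A (i - 1))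

theorem boundaries_le_cycles (hd : ∀ (i : ℤ) (x : A i), d (i - 1) (d i x) = 0) (i : ℤ) :
    boundaries A d i ≤ cycles A d i := by
  have key : ∀ (j k : ℤ) (h : j - 1 = k) (x : A j), d k (ccast A h (d j x)) = 0 := by
    rintro j k rfl x
    exact hd j x
  rintro _ ⟨_, ⟨x, rfl⟩, rfl⟩
  exact key _ _ _ x

theorem finrank_boundaries (i : ℤ) :
    Module.finrank ℤ (boundaries A d i) = Module.finrank ℤ (LinearMap.range (d (i + 1))) :=
  (Submodule.equivMapOfInjective _ (ccast_injective A _) _).finrank_eq.symm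

theorem finrank_eq_homology_add_boundaries (hd : ∀ (i : ℤ) (x : A i), d (i - 1) (d i x) = 0)
    [∀ i, Module.Finite ℤ (A i)] (i : ℤ) :
    Module.finrank ℤ (A i) = Module.finrank ℤ (homology A d i) +
      Module.finrank ℤ (boundaries A d i) + Module.finrank ℤ (boundaries A d (i - 1)) := by
  have h₁ := Submodule.finrank_quotient_add_finrank (LinearMap.ker (d i))
  rw [(d i).quotKerEquivRange.finrank_eq] at h₁
  have h₂ := Submodule.finrank_quotient_add_finrank
    (Submodule.comap (cycles A d i).subtype (boundaries A d i))
  have h₃ := (Submodule.comapSubtypeEquivOfLe (boundaries_le_cycles A d hd i)).finrank_eq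
  have h₄ := finrank_boundaries A d (i - 1)
  rw [sub_add_cancel] at h₄
  simp only [homology, cycles] at *
  omega

theorem finrank_boundaries_eq_zero_of_subsingleton (i : ℤ) [Subsingleton (A i)] :
    Module.finrank ℤ (boundaries A d i) = 0 :=
  Module.finrank_zero_of_subsingleton

theorem finrank_boundaries_eq_zero_of_subsingleton_succ (i : ℤ) [Subsingleton (A (i + 1))] :
    Module.finrank ℤ (boundaries A d i) = 0 := by
  have : Subsingleton (LinearMap.range (d (i + 1))) :=
    (LinearMap.surjective_rangeRestrict (d (i + 1))).subsingleton
  rw [finrank_boundaries]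
  exact Module.finrank_zero_of_subsingleton

end Complex

/-- Let `(Aᵢ)` be a complex of finitely generated free abelian
groups, nonzero only for `|i| ≤ N`, with differential `d` satisfying `d∘d = 0`, and
suppose every homology group `Hᵢ(A)` is free. Then there is an isomorphism of
graded abelian groups `det(A) ≅ det(H_*(A))`: the two rank-one determinant lines
are isomorphic, and they sit in the same degree, i.e. the Euler characteristics
agree: `Σᵢ (−1)^i rank Aᵢ = Σᵢ (−1)^i rank Hᵢ(A)`. -/
theorem det_of_complex_iso_det_of_homology
    (A : ℤ → Type) [∀ i, AddCommGroup (A i)]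
    (hfree : ∀ i, Module.Free ℤ (A i)) (hfin : ∀ i, Module.Finite ℤ (A i))
    (N : ℕ) (hsupp : ∀ i : ℤ, (N : ℤ) < |i| → Subsingleton (A i))
    (d : ∀ i, A i →ₗ[ℤ] A (i - 1))
    (hd : ∀ (i : ℤ) (x : A i), d (i - 1) (d i x) = 0)
    (hH : ∀ i, Module.Free ℤ (homology A d i)) :
    Nonempty (detLine A N ≃ₗ[ℤ] detLine (fun i => homology A d i) N) ∧
    (∑ i ∈ Finset.Icc (-(N : ℤ)) (N : ℤ),
        (-1 : ℤ) ^ i.natAbs * (Module.finrank ℤ (A i) : ℤ) =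
      ∑ i ∈ Finset.Icc (-(N : ℤ)) (N : ℤ),
        (-1 : ℤ) ^ i.natAbs * (Module.finrank ℤ (homology A d i) : ℤ)) := by
  have hfinH : ∀ i, Module.Finite ℤ (homology A d i) := fun i =>
    have : Module.Finite ℤ (cycles A d i) :=
      Module.Finite.of_injective _ (cycles A d i).injective_subtype
    Module.Finite.quotient ℤ _
  constructor
  · refine ⟨PiTensorProduct.congr fun i => ?_⟩
    exact (nonempty_detSigned_linearEquiv (A i.val) i.val).some.trans
      (nonempty_detSigned_linearEquiv (homology A d i.val) i.val).some.symm
  · rw [← sub_eq_zero, ← Finset.sum_sub_distrib]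
    have h := sum_Icc_sub_shift
      (fun i => (-1 : ℤ) ^ i.natAbs * (Module.finrank ℤ (boundaries A d i) : ℤ)) N
    have hN : Subsingleton (A ((N : ℤ) + 1)) := hsupp _ (by rw [lt_abs]; omega)
    have hN' : Subsingleton (A (-(N : ℤ) - 1)) := hsupp _ (by rw [lt_abs]; omega)
    simp only [finrank_boundaries_eq_zero_of_subsingleton_succ A d (N : ℤ),
      finrank_boundaries_eq_zero_of_subsingleton A d (-(N : ℤ) - 1), Nat.cast_zero, mul_zero,
      sub_zero] at h
    rw [← h]
    refine Finset.sum_congr rfl fun i _ => ?_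
    rw [finrank_eq_homology_add_boundaries A d hd i, neg_one_pow_natAbs_sub_one]
    push_cast
    ring

end
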